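/- Consider the parametric linear semi-infinite problem P(c, b) with compact Hausdorff index space T, continuous data t ↦ (a_t, b̄_t), nominal parameter (c̄, b̄), x̄ ∈ S(c̄, b̄), and q > 0. If the Extended Nürnberger Condition (ENC) is satisfied at ((c̄, b̄), x̄), then clm_q S((c̄, b̄), x̄) = clm_q S_c̄(b̄, x̄). -/

import Mathlib

/-!
Fixing the first parameter at `c₀` can only shrink the graph of the solution mapping, and the norm
of `(c₀, b) - (c₀, b₀)` is that of `b - b₀`, so one inequality between the moduli is immediate. For
the other one it suffices that, near `((c₀, b₀), x₀)`, every solution of `P(c, b)` is also a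
solution of `P(c₀, b)` (`eventually_sol_subset`): both calmness properties then hold with exactly
the same moduli `τ`.

A solution `x` of `P(c, b)` has, by the Slater condition and Carathéodory's theorem for cones, a
KKT certificate with `n` indices `t i` and nonnegative multipliers `l i` (`exists_isKKT`). The
Slater point bounds the multipliers, so all these certificates lie in a fixed compact set, and a
tube-lemma argument reduces the claim to a neighbourhood of each pair `(t, l)` in it. If `(t, l)`
is not a certificate at the nominal data, neither is any nearby pair at nearby data. If it is one,
the Extended Nürnberger Condition makes all `l i` positive and the vectors `a (t i)` a basis
(`IsKKT.pos_and_linearIndependent`); hence for `t'` near `t` the vector `-c₀` still lies in the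
cone of the `a (t' i)` (`eventually_mem_cone`), and nearby multipliers are still positive, so that
complementarity makes every `t' i` active at `(b, x)`. This is a KKT certificate of `x` for
`P(c₀, b)`, which is sufficient for optimality.
-/

noncomputable section

open Filter Topology Set Pointwise
open scoped ENNReal RealInnerProductSpace

variable {X : Type*} {Y : Type*} [NormedAddCommGroup X] [NormedSpace ℝ X]
  [NormedAddCommGroup Y] [NormedSpace ℝ Y]

/-- A set-valued mapping `H : X ⇉ Y` is `q`-order positively homogeneous if `0 ∈ H 0`
and `H (l • x) = l ^ q • H x` for all `x` and all `l > 0`. -/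
def PosHom (q : ℝ) (H : X → Set Y) : Prop :=
  (0 : Y) ∈ H 0 ∧ ∀ (x : X) (l : ℝ), 0 < l → H (l • x) = (l ^ q) • H x

/-- A single-valued mapping `f : X → Y` is `q`-order positively homogeneous if `f 0 = 0`
and `f (l • x) = l ^ q • f x` for all `x` and all `l > 0`. -/
def PosHomFun (q : ℝ) (f : X → Y) : Prop :=
  f 0 = 0 ∧ ∀ (x : X) (l : ℝ), 0 < l → f (l • x) = (l ^ q) • f x

/-- The inverse of a set-valued mapping. -/
def svInv (H : X → Set Y) : Y → Set X := fun y => {x | y ∈ H x}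

/-- `‖H‖⁺_q = sup {‖y‖/‖x‖^q : (x,y) ∈ gph H, (x,y) ≠ (0,0)}`, with `sup ∅ = 0` and
ratios with `x = 0`, `y ≠ 0` equal to `+∞`. -/
def plusNorm (q : ℝ) (H : X → Set Y) : ℝ≥0∞ :=
  ⨆ (p : X × Y) (_ : p.2 ∈ H p.1 ∧ p ≠ 0),
    ENNReal.ofReal ‖p.2‖ / ENNReal.ofReal (‖p.1‖ ^ q)

/-- `‖H‖⊖_q = inf {‖y‖/‖x‖^q : (x,y) ∈ gph H, (x,y) ≠ (0,0)}`, with `inf ∅ = +∞` and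
ratios with `x = 0`, `y ≠ 0` equal to `+∞`. -/
def minusNorm (q : ℝ) (H : X → Set Y) : ℝ≥0∞ :=
  ⨅ (p : X × Y) (_ : p.2 ∈ H p.1 ∧ p ≠ 0),
    ENNReal.ofReal ‖p.2‖ / ENNReal.ofReal (‖p.1‖ ^ q)

/-- Outer semicontinuity of a set-valued mapping at a point (sequential form). -/
def OuterSemicontAt (H : X → Set Y) (x₀ : X) : Prop :=
  ∀ (u : ℕ → X) (v : ℕ → Y) (y : Y), (∀ k, v k ∈ H (u k)) →
    Tendsto u atTop (𝓝 x₀) → Tendsto v atTop (𝓝 y) → y ∈ H x₀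

/-- The `q`-order graphical derivative of `F` at `(x₀, y₀) ∈ gph F`. -/
def gder (q : ℝ) (F : X → Set Y) (x₀ : X) (y₀ : Y) : X → Set Y := fun x =>
  {y | ∃ (u : ℕ → X) (v : ℕ → Y) (t : ℕ → ℝ),
    Tendsto u atTop (𝓝 x) ∧ Tendsto v atTop (𝓝 y) ∧
    (∀ k, 0 < t k) ∧ Tendsto t atTop (𝓝 0) ∧
    ∀ k, y₀ + (t k ^ q) • v k ∈ F (x₀ + t k • u k)}

/-- `f` is `q`-order Hadamard directionally differentiable at `x₀` with derivative `Df`: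
for each `x`, `(f (x₀ + t u) - f x₀) / t ^ q → Df x` as `u → x`, `t ↓ 0`. -/
def HadamardDeriv (q : ℝ) (f : X → Y) (x₀ : X) (Df : X → Y) : Prop :=
  ∀ x : X, Tendsto (fun p : X × ℝ => ((p.2 ^ q)⁻¹) • (f (x₀ + p.2 • p.1) - f x₀))
    ((𝓝 x) ×ˢ (𝓝[>] (0 : ℝ))) (𝓝 (Df x))

/-- The `q`-order Hadamard directional subderivative
`f'_q(x₀; x) = liminf_{u → x, t ↓ 0} (f (x₀ + t u) - f x₀) / t ^ q`. -/
def subder (q : ℝ) (f : X → EReal) (x₀ : X) (x : X) : EReal :=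
  liminf (fun p : X × ℝ => (f (x₀ + p.2 • p.1) - f x₀) / ((p.2 ^ q : ℝ) : EReal))
    ((𝓝 x) ×ˢ (𝓝[>] (0 : ℝ)))

/-- The nonnegative part of an extended real number, as a value in `[0, +∞]`. -/
def erealPos (x : EReal) : ℝ≥0∞ := if x = ⊤ then ⊤ else ENNReal.ofReal x.toReal

/-- `‖f'_q(x₀; ·)‖_q = inf_{‖x‖ = 1} (f'_q(x₀; x))₊`, with `inf ∅ = +∞`. -/
def subderNorm (q : ℝ) (f : X → EReal) (x₀ : X) : ℝ≥0∞ :=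
  ⨅ (x : X) (_ : ‖x‖ = 1), erealPos (subder q f x₀ x)

/-- The epigraphical mapping of `f`. -/
def epiMap (f : X → EReal) : X → Set ℝ := fun x => {μ : ℝ | f x ≤ (μ : EReal)}

/-- `F` is `q`-order strongly subregular at `(x₀, y₀)` with modulus `τ`. -/
def StrSubregWith (q τ : ℝ) (F : X → Set Y) (x₀ : X) (y₀ : Y) : Prop :=
  ∃ U ∈ 𝓝 x₀, ∃ V ∈ 𝓝 y₀, ∀ x ∈ U,
    ENNReal.ofReal (τ * ‖x - x₀‖ ^ q) ≤ EMetric.infEdist y₀ (F x ∩ V)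

/-- `srg_q F (x₀, y₀)`: the supremum of all moduli of `q`-order strong subregularity. -/
def srgMod (q : ℝ) (F : X → Set Y) (x₀ : X) (y₀ : Y) : ℝ≥0∞ :=
  ⨆ (τ : ℝ) (_ : 0 < τ ∧ StrSubregWith q τ F x₀ y₀), ENNReal.ofReal τ

/-- `S` possesses the `q`-order isolated calmness property at `(y₀, x₀)` with modulus `τ`. -/
def CalmWith (q τ : ℝ) (S : Y → Set X) (y₀ : Y) (x₀ : X) : Prop :=
  ∃ U ∈ 𝓝 x₀, ∃ V ∈ 𝓝 y₀, ∀ y ∈ V, ∀ x ∈ S y, x ∈ U → τ * ‖x - x₀‖ ^ q ≤ ‖y - y₀‖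

/-- `clm_q S (y₀, x₀)`: the supremum of all moduli of `q`-order isolated calmness. -/
def clmMod (q : ℝ) (S : Y → Set X) (y₀ : Y) (x₀ : X) : ℝ≥0∞ :=
  ⨆ (τ : ℝ) (_ : 0 < τ ∧ CalmWith q τ S y₀ x₀), ENNReal.ofReal τ

/-- `x₀` is a `q`-order sharp minimizer of `f` with modulus `τ`. -/
def SharpMinWith (q τ : ℝ) (f : X → EReal) (x₀ : X) : Prop :=
  ∃ U ∈ 𝓝 x₀, ∀ x ∈ U, ((τ * ‖x - x₀‖ ^ q : ℝ) : EReal) ≤ f x - f x₀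

/-- `shrp_q f (x₀)`: the supremum of all moduli of `q`-order sharp minimality. -/
def shrpMod (q : ℝ) (f : X → EReal) (x₀ : X) : ℝ≥0∞ :=
  ⨆ (τ : ℝ) (_ : 0 < τ ∧ SharpMinWith q τ f x₀), ENNReal.ofReal τ

/-- `H : X ⇉ X*` is `q`-order positively definite with modulus `l`:
`⟨x*, x⟩ ≥ l ‖x‖^(q+1)` for all `(x, x*) ∈ gph H`. -/
def PosDefWith (q l : ℝ) (H : X → Set (X →L[ℝ] ℝ)) : Prop :=
  ∀ (x : X), ∀ xs ∈ H x, l * ‖x‖ ^ (q + 1) ≤ xs x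

/-- `‖H‖*_q = inf {⟨x*, x⟩₊ / ‖x‖^(q+1) : (x, x*) ∈ gph H, x ≠ 0}`, with `inf ∅ = +∞`. -/
def starNorm (q : ℝ) (H : X → Set (X →L[ℝ] ℝ)) : ℝ≥0∞ :=
  ⨅ (p : X × (X →L[ℝ] ℝ)) (_ : p.2 ∈ H p.1 ∧ p.1 ≠ 0),
    ENNReal.ofReal (p.2 p.1) / ENNReal.ofReal (‖p.1‖ ^ (q + 1))

/-- The convex subdifferential of `f : X → ℝ ∪ {+∞}` at `x`. -/
def subdiff (f : X → EReal) (x : X) : Set (X →L[ℝ] ℝ) :=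
  {xs | ∀ u : X, ((xs (u - x) : ℝ) : EReal) ≤ f u - f x}

/-- Convexity for extended-real-valued functions. -/
def EConvexOn (f : X → EReal) : Prop :=
  ∀ x y : X, ∀ a b : ℝ, 0 ≤ a → 0 ≤ b → a + b = 1 →
    f (a • x + b • y) ≤ (a : EReal) * f x + (b : EReal) * f y


section SIP

variable {T : Type*} [TopologicalSpace T] [CompactSpace T]

/-- Feasible set mapping of the linear semi-infinite problem. -/
def feas {n : ℕ} (a : C(T, EuclideanSpace ℝ (Fin n))) (b : C(T, ℝ)) :
    Set (EuclideanSpace ℝ (Fin n)) :=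
  {x | ∀ t : T, ⟪a t, x⟫ ≤ b t}

/-- Solution mapping `(c, b) ↦ S(c, b)` of the linear semi-infinite problem. -/
def sol {n : ℕ} (a : C(T, EuclideanSpace ℝ (Fin n))) :
    EuclideanSpace ℝ (Fin n) × C(T, ℝ) → Set (EuclideanSpace ℝ (Fin n)) :=
  fun p => {x ∈ feas a p.2 | ∀ u ∈ feas a p.2, ⟪p.1, x⟫ ≤ ⟪p.1, u⟫}

/-- Level set mapping `(α, b) ↦ L(α, b)` of the linear semi-infinite problem. -/
def lev {n : ℕ} (a : C(T, EuclideanSpace ℝ (Fin n))) (c : EuclideanSpace ℝ (Fin n)) :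
    ℝ × C(T, ℝ) → Set (EuclideanSpace ℝ (Fin n)) :=
  fun p => {x ∈ feas a p.2 | ⟪c, x⟫ ≤ p.1}

/-- The function `f(x) = max {⟨c, x − x₀⟩, max_t (⟨a_t, x⟩ − b_t)}`. -/
def sipObj {n : ℕ} (a : C(T, EuclideanSpace ℝ (Fin n))) (b : C(T, ℝ))
    (c x₀ : EuclideanSpace ℝ (Fin n)) : EuclideanSpace ℝ (Fin n) → EReal :=
  fun x => ((max (⟪c, x - x₀⟫) (⨆ t : T, (⟪a t, x⟫ - b t)) : ℝ) : EReal)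

end SIP
section Aux

/-! ### Finite-dimensional convexity -/

/-- Carathéodory's theorem for convex cones: a nonnegative combination of a finite family can be
rewritten as one over a linearly independent subfamily. -/
theorem conic_caratheodory {ι E : Type*} [AddCommGroup E] [Module ℝ E]
    (v : ι → E) : ∀ (s : Finset ι) (w : ι → ℝ), (∀ i ∈ s, 0 ≤ w i) →
    ∃ J ⊆ s, ∃ μ : ι → ℝ, (∀ i ∈ J, 0 ≤ μ i) ∧ ∑ i ∈ J, μ i • v i = ∑ i ∈ s, w i • v i ∧
      LinearIndepOn ℝ v (J : Set ι) := by
  classical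
  intro s
  induction s using Finset.strongInduction with
  | H s ih =>
    intro w hw
    by_cases hli : LinearIndepOn ℝ v (s : Set ι)
    · exact ⟨s, subset_rfl, w, hw, rfl, hli⟩
    have hg : ∃ g : ι → ℝ, ∑ i ∈ s, g i • v i = 0 ∧ ∃ i ∈ s, 0 < g i := by
      rw [linearIndepOn_finset_iff] at hli
      push Not at hli
      obtain ⟨g, hg, i, hi, hgi⟩ := hli
      rcases lt_or_gt_of_ne hgi with h | h
      · exact ⟨-g, by simp [hg], i, hi, by simpa using h⟩
      · exact ⟨g, hg, i, hi, h⟩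
    obtain ⟨g, hg0, i₁, hi₁, hgi₁⟩ := hg
    -- the first coefficient to vanish when moving along `-g` is the one minimizing `w i / g i`
    obtain ⟨j, hj, hmin⟩ := Finset.exists_min_image (s.filter fun i => 0 < g i)
      (fun i => w i / g i) ⟨i₁, by simp [hi₁, hgi₁]⟩
    obtain ⟨hjs, hgj⟩ := Finset.mem_filter.1 hj
    have hθ : 0 ≤ w j / g j := div_nonneg (hw j hjs) hgj.le
    have hw' : ∀ i ∈ s, 0 ≤ w i - w j / g j * g i := by
      intro i hi
      by_cases h : 0 < g i
      · have := hmin i (by simp [hi, h])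
        rw [le_div_iff₀ h] at this
        linarith
      · have := mul_nonneg hθ (neg_nonneg.2 (not_lt.1 h))
        have := hw i hi
        linarith
    have hsum : ∑ i ∈ s, (w i - w j / g j * g i) • v i = ∑ i ∈ s, w i • v i := by
      simp only [sub_smul, mul_smul, Finset.sum_sub_distrib, ← Finset.smul_sum, hg0]
      simp
    obtain ⟨J, hJ, μ, hμ, hμs, hJli⟩ := ih (s.erase j) (Finset.erase_ssubset hjs)
      (fun i => w i - w j / g j * g i) (fun i hi => hw' i (Finset.mem_of_mem_erase hi))
    refine ⟨J, hJ.trans (Finset.erase_subset _ _), μ, hμ, ?_, hJli⟩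
    rw [hμs, ← hsum, ← Finset.add_sum_erase s _ hjs]
    simp [hgj.ne']

/-- A weighted finite family of at most `m` points can be reindexed by exactly `Fin m`, the missing
places being filled with the point `d` carrying weight `0`. The predicate `Q` transports any
property of the pairs (weight, point) that also holds for `(0, d)`. -/
theorem exists_fin_padding {ι α E : Type*} [AddCommGroup E] [Module ℝ E] (f : α → E)
    (Q : ℝ → α → Prop) {m : ℕ} (J : Finset ι) (hJ : J.card ≤ m) (w : ι → ℝ) (z : ι → α)
    (hQ : ∀ i ∈ J, Q (w i) (z i)) (d : α) (hd : Q 0 d) :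
    ∃ (w' : Fin m → ℝ) (z' : Fin m → α), (∀ i, Q (w' i) (z' i)) ∧
      ∑ i, w' i = ∑ i ∈ J, w i ∧ ∑ i, w' i • f (z' i) = ∑ i ∈ J, w i • f (z i) := by
  classical
  obtain ⟨e⟩ : Nonempty (J ↪ Fin m) := Function.Embedding.nonempty_of_card_le (by simpa using hJ)
  have hw : ∀ i, Function.extend e (fun j : J => w j) 0 (e i) = w i :=
    fun i => e.injective.extend_apply _ _ i
  have hz : ∀ i, Function.extend e (fun j : J => z j) (fun _ => d) (e i) = z i :=
    fun i => e.injective.extend_apply _ _ i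
  have hw0 : ∀ k, k ∉ Set.range e → Function.extend e (fun j : J => w j) 0 k = 0 :=
    fun k hk => Function.extend_apply' _ _ _ (by simpa using hk)
  refine ⟨Function.extend e (fun j : J => w j) 0,
    Function.extend e (fun j : J => z j) (fun _ => d), ?_, ?_, ?_⟩
  · intro k
    by_cases hk : k ∈ Set.range e
    · obtain ⟨i, rfl⟩ := hk
      rw [hw, hz]
      exact hQ i i.2
    · rw [hw0 k hk, Function.extend_apply' _ _ _ (by simpa using hk)]
      exact hd
  · rw [← Finset.sum_coe_sort J]
    refine (Finset.sum_of_injOn e e.injective.injOn (fun _ _ => by simp) ?_ ?_).symm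
    · intro k _ hk
      exact hw0 k (by simpa using hk)
    · intro i _
      rw [hw]
  · rw [← Finset.sum_coe_sort J]
    refine (Finset.sum_of_injOn e e.injective.injOn (fun _ _ => by simp) ?_ ?_).symm
    · intro k _ hk
      rw [hw0 k (by simpa using hk), zero_smul]
    · intro i _
      rw [hw, hz]

/-- In finite dimension the convex hull of a compact set is compact: by Carathéodory's theorem it is
a continuous image of a simplex times a power of the set. -/
theorem isCompact_convexHull_of_isCompact {E : Type*} [NormedAddCommGroup E] [NormedSpace ℝ E]
    [FiniteDimensional ℝ E] {s : Set E} (hs : IsCompact s) : IsCompact (convexHull ℝ s) := by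
  classical
  rcases s.eq_empty_or_nonempty with rfl | ⟨d, hd⟩
  · simp
  have hcomp : IsCompact ((stdSimplex ℝ (Fin (Module.finrank ℝ E + 1))) ×ˢ
      (Set.univ.pi fun _ : Fin (Module.finrank ℝ E + 1) => s)) :=
    (isCompact_stdSimplex ℝ _).prod (isCompact_univ_pi fun _ => hs)
  have himg := hcomp.image (f := fun p : (Fin (Module.finrank ℝ E + 1) → ℝ) ×
    (Fin (Module.finrank ℝ E + 1) → E) => ∑ i, p.1 i • p.2 i) (by fun_prop)
  convert himg
  ext x
  constructor
  · intro hx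
    obtain ⟨ι, _, z, w, hz, hai, hw, hw1, rfl⟩ := eq_pos_convex_span_of_mem_convexHull hx
    obtain ⟨w', z', hQ, h1, h2⟩ := exists_fin_padding (fun y : E => y) (fun r y => 0 ≤ r ∧ y ∈ s)
      (m := Module.finrank ℝ E + 1) Finset.univ
      (by simpa using hai.card_le_finrank_succ.trans (Nat.succ_le_succ (Submodule.finrank_le _)))
      w z (fun i _ => ⟨(hw i).le, hz ⟨i, rfl⟩⟩) d ⟨le_rfl, hd⟩
    exact ⟨(w', z'), ⟨⟨fun i => (hQ i).1, h1.trans hw1⟩, fun i _ => (hQ i).2⟩, h2⟩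
  · rintro ⟨⟨w, z⟩, ⟨⟨hw, hw1⟩, hz⟩, rfl⟩
    exact (convex_convexHull ℝ s).sum_mem (fun i _ => hw i) hw1
      fun i _ => subset_convexHull ℝ s (hz i trivial)

/-- A vector in the interior of the cone spanned by a basis remains in the cone spanned by every
nearby family, because by Cramer's rule its coordinates depend continuously on the basis. -/
theorem eventually_mem_cone {n : ℕ} (v : Fin n → EuclideanSpace ℝ (Fin n))
    (hv : LinearIndependent ℝ v) (w : Fin n → ℝ) (hw : ∀ i, 0 < w i)
    (y : EuclideanSpace ℝ (Fin n)) (hy : y = ∑ i, w i • v i) :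
    ∀ᶠ v' in 𝓝 v, ∃ μ : Fin n → ℝ, (∀ i, 0 ≤ μ i) ∧ y = ∑ i, μ i • v' i := by
  classical
  let M : (Fin n → EuclideanSpace ℝ (Fin n)) → Matrix (Fin n) (Fin n) ℝ :=
    fun v' => Matrix.of fun i j => v' j i
  have hM : Continuous M := by
    refine continuous_matrix fun i j => ?_
    simp only [M, Matrix.of_apply]
    fun_prop
  have hmul : ∀ v' (u : Fin n → ℝ), (M v').mulVec u = (∑ j, u j • v' j).ofLp := by
    intro v' u
    ext i
    simp [M, Matrix.mulVec, dotProduct, mul_comm]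
  have hunit : IsUnit (M v).det := by
    rw [← Matrix.isUnit_iff_isUnit_det, ← Matrix.mulVec_injective_iff_isUnit]
    intro u u' h
    rw [hmul, hmul] at h
    have h := (WithLp.ofLp_injective 2) h
    rw [← sub_eq_zero, ← Finset.sum_sub_distrib] at h
    simp only [← sub_smul] at h
    funext i
    exact sub_eq_zero.1 (Fintype.linearIndependent_iff.1 hv _ h i)
  have hcr : (M v).cramer y.ofLp = (M v).det • w := by
    rw [← Matrix.det_smul_inv_mulVec_eq_cramer _ _ hunit, hy, ← hmul, Matrix.mulVec_mulVec,
      Matrix.nonsing_inv_mul _ hunit, Matrix.one_mulVec]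
  have hdet : Continuous fun v' => (M v').det := hM.matrix_det
  have hcont : ∀ i, Continuous fun v' => (M v').det * (M v').cramer y.ofLp i := fun i =>
    hdet.mul ((continuous_apply i).comp (hM.matrix_cramer continuous_const))
  -- `det * cramer` has the sign of the coordinate `cramer / det` and is a polynomial
  have hpos : ∀ᶠ v' in 𝓝 v, ∀ i, 0 < (M v').det * (M v').cramer y.ofLp i := by
    refine eventually_all.2 fun i => (hcont i).continuousAt.eventually_const_lt ?_
    simp only [hcr]
    have := mul_pos (mul_self_pos.2 hunit.ne_zero) (hw i)
    simpa [mul_assoc] using this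
  filter_upwards [hpos, hdet.continuousAt.eventually_ne hunit.ne_zero] with v' h1 h2
  refine ⟨((M v').det)⁻¹ • (M v').cramer y.ofLp, fun i => ?_, ?_⟩
  · have h3 : ((M v').det)⁻¹ * (M v').cramer y.ofLp i
        = ((M v').det * (M v').cramer y.ofLp i) / ((M v').det * (M v').det) := by
      field_simp
    simp only [Pi.smul_apply, smul_eq_mul]
    rw [h3]
    exact div_nonneg (h1 i).le (mul_self_nonneg _)
  · apply WithLp.ofLp_injective 2
    rw [← hmul, Matrix.mulVec_smul, Matrix.mulVec_cramer, smul_smul, inv_mul_cancel₀ h2, one_smul]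

/-! ### KKT certificates -/

variable {n : ℕ} {T : Type*} [TopologicalSpace T]

/-- Karush–Kuhn–Tucker certificate for `x` in `P(c, b)` supported on `n` indices: nonnegative
multipliers `l` with `-c = ∑ l i • a (t i)`. Instead of requiring every `t i` to be active, only
complementarity is imposed, so that certificates using fewer indices can be padded by zeros. -/
def IsKKT (a : C(T, EuclideanSpace ℝ (Fin n))) (c : EuclideanSpace ℝ (Fin n)) (b : C(T, ℝ))
    (x : EuclideanSpace ℝ (Fin n)) (t : Fin n → T) (l : Fin n → ℝ) : Prop :=
  (∀ i, 0 ≤ l i) ∧ (∀ i, l i * (⟪a (t i), x⟫ - b (t i)) = 0) ∧ -c = ∑ i, l i • a (t i)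

/-- A direction along which all active constraints strictly decrease is feasible. The step length is
uniform over the indices because `T` is compact. -/
theorem exists_feasible_step [CompactSpace T] (a : C(T, EuclideanSpace ℝ (Fin n))) (b : C(T, ℝ))
    (x d : EuclideanSpace ℝ (Fin n)) (hx : x ∈ feas a b)
    (hd : ∀ t, ⟪a t, x⟫ = b t → ⟪a t, d⟫ < 0) : ∃ ε : ℝ, 0 < ε ∧ x + ε • d ∈ feas a b := by
  have key : ∀ᶠ ε in 𝓝 (0 : ℝ), ∀ t ∈ (Set.univ : Set T), 0 < ε → ⟪a t, x + ε • d⟫ ≤ b t := by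
    refine isCompact_univ.eventually_forall_of_forall_eventually fun t _ => ?_
    by_cases ht : ⟪a t, x⟫ = b t
    · have hc : Continuous fun z : ℝ × T => ⟪a z.2, d⟫ := by fun_prop
      filter_upwards [hc.continuousAt.eventually_lt_const (u := 0) (hd t ht)] with z hz hε
      rw [inner_add_right, inner_smul_right]
      have := mul_neg_of_pos_of_neg hε hz
      linarith [hx z.2]
    · have hc : Continuous fun z : ℝ × T => ⟪a z.2, x + z.1 • d⟫ - b z.2 := by fun_prop
      have hlt : ⟪a t, x + (0 : ℝ) • d⟫ - b t < 0 := by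
        simpa using lt_of_le_of_ne (hx t) ht
      have hev : ∀ᶠ z : ℝ × T in 𝓝 ((0 : ℝ), t), ⟪a z.2, x + z.1 • d⟫ - b z.2 < 0 :=
        (hc.tendsto ((0 : ℝ), t)).eventually_lt_const hlt
      filter_upwards [hev] with z hz _
      linarith
  obtain ⟨ε, h1, h2⟩ := ((key.filter_mono nhdsWithin_le_nhds).and
    (self_mem_nhdsWithin : Set.Ioi (0 : ℝ) ∈ 𝓝[>] 0)).exists
  exact ⟨ε, h2, fun t => h1 t trivial h2⟩

/-- Necessity of the Karush–Kuhn–Tucker conditions under the Slater condition, with at most `n`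
multipliers. -/
theorem exists_isKKT [CompactSpace T] [Nonempty T] (a : C(T, EuclideanSpace ℝ (Fin n)))
    (c : EuclideanSpace ℝ (Fin n)) (b : C(T, ℝ)) (x xs : EuclideanSpace ℝ (Fin n))
    (hx : x ∈ sol a (c, b)) (hxs : ∀ t, ⟪a t, xs⟫ < b t) : ∃ t l, IsKKT a c b x t l := by
  classical
  obtain ⟨hfeas, hopt⟩ := hx
  set A : Set T := {t | ⟪a t, x⟫ = b t} with hA
  have hAc : IsCompact A := by
    apply IsClosed.isCompact
    exact isClosed_eq (by fun_prop) (by fun_prop)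
  have hSc : IsCompact (convexHull ℝ (insert c (a '' A))) :=
    isCompact_convexHull_of_isCompact ((hAc.image a.continuous).insert c)
  -- Gordan's alternative: a common descent direction is excluded by optimality
  have h0 : (0 : EuclideanSpace ℝ (Fin n)) ∈ convexHull ℝ (insert c (a '' A)) := by
    by_contra h0
    obtain ⟨f, u, hf, hu⟩ :=
      geometric_hahn_banach_closed_point (convex_convexHull ℝ _) hSc.isClosed h0
    obtain ⟨d, rfl⟩ := (InnerProductSpace.toDual ℝ (EuclideanSpace ℝ (Fin n))).surjective f
    have hneg : ∀ y ∈ insert c (a '' A), ⟪y, d⟫ < 0 := by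
      intro y hy
      have := (hf y (subset_convexHull ℝ _ hy)).trans hu
      simpa [real_inner_comm] using this
    obtain ⟨ε, hε, hεf⟩ := exists_feasible_step a b x d hfeas
      fun t ht => hneg _ (Set.mem_insert_of_mem _ ⟨t, ht, rfl⟩)
    have h1 := hopt _ hεf
    have h2 := mul_neg_of_pos_of_neg hε (hneg c (Set.mem_insert _ _))
    simp only [inner_add_right, inner_smul_right] at h1
    linarith
  obtain ⟨ι, _, w, z, hw, hw1, hz, hwz⟩ := mem_convexHull_iff_exists_fintype.1 h0
  have hz' : ∀ i, ∃ t, z i ≠ c → t ∈ A ∧ a t = z i := by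
    intro i
    rcases hz i with h | ⟨t, ht, h⟩
    · exact ⟨Classical.arbitrary T, fun h' => absurd h h'⟩
    · exact ⟨t, fun _ => ⟨ht, h⟩⟩
  choose t ht using hz'
  set I : Finset ι := Finset.univ.filter fun i => z i ≠ c with hI
  set ω : ℝ := ∑ i ∈ Finset.univ.filter (fun i => z i = c), w i with hω
  have hω0 : 0 ≤ ω := Finset.sum_nonneg fun i _ => hw i
  have hsplit : ω • c + ∑ i ∈ I, w i • a (t i) = 0 := by
    rw [← hwz, ← Finset.sum_filter_add_sum_filter_not Finset.univ (fun i => z i = c), hω,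
      Finset.sum_smul]
    congr 1
    · exact Finset.sum_congr rfl fun i hi => by rw [(Finset.mem_filter.1 hi).2]
    · exact Finset.sum_congr rfl fun i hi => by rw [(ht i (Finset.mem_filter.1 hi).2).2]
  have hsplit1 : ω + ∑ i ∈ I, w i = 1 := by
    rw [← hw1, ← Finset.sum_filter_add_sum_filter_not Finset.univ (fun i => z i = c)]
  -- the Slater point forces a positive weight on `c`
  have hωpos : 0 < ω := by
    refine lt_of_le_of_ne hω0 fun h => ?_
    rw [← h] at hsplit hsplit1
    have h1 : ∑ i ∈ I, w i * ⟪a (t i), xs - x⟫ = 0 := by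
      have := congrArg (fun y => ⟪y, xs - x⟫) hsplit
      simpa [sum_inner, inner_smul_left] using this
    have hneg : ∀ i ∈ I, ⟪a (t i), xs - x⟫ < 0 := by
      intro i hi
      have h3 : ⟪a (t i), x⟫ = b (t i) := (ht i (Finset.mem_filter.1 hi).2).1
      rw [inner_sub_right, h3]
      linarith [hxs (t i)]
    have h2 := (Finset.sum_eq_zero_iff_of_nonpos fun i hi =>
      mul_nonpos_of_nonneg_of_nonpos (hw i) (hneg i hi).le).1 h1
    have h3 : ∑ i ∈ I, w i = 0 := Finset.sum_eq_zero fun i hi =>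
      (mul_eq_zero.1 (h2 i hi)).resolve_right (hneg i hi).ne
    rw [h3] at hsplit1
    norm_num at hsplit1
  have hc : -c = ∑ i ∈ I, (ω⁻¹ * w i) • a (t i) := by
    simp only [mul_smul, ← Finset.smul_sum]
    rw [eq_neg_of_add_eq_zero_right hsplit, smul_neg, smul_smul, inv_mul_cancel₀ hωpos.ne',
      one_smul]
  obtain ⟨J, hJ, μ, hμ, hμs, hli⟩ := conic_caratheodory (fun i => a (t i)) I
    (fun i => ω⁻¹ * w i) fun i _ => mul_nonneg (inv_nonneg.2 hω0) (hw i)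
  have hcard : J.card ≤ n := by
    have := LinearIndependent.fintype_card_le_finrank hli
    simpa using this
  obtain ⟨l, t', hQ, -, hsum⟩ := exists_fin_padding a
    (fun r s => 0 ≤ r ∧ r * (⟪a s, x⟫ - b s) = 0) J hcard μ t
    (fun i hi => ⟨hμ i hi, by
      have h3 : ⟪a (t i), x⟫ = b (t i) := (ht i (Finset.mem_filter.1 (hJ hi)).2).1
      rw [h3, sub_self, mul_zero]⟩) (Classical.arbitrary T) ⟨le_rfl, zero_mul _⟩
  exact ⟨t', l, fun i => (hQ i).1, fun i => (hQ i).2, by rw [hsum, hμs, hc]⟩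

/-! ### Consequences of the Extended Nürnberger Condition -/

/-- Under the Extended Nürnberger Condition every certificate at the nominal point uses all `n`
indices with positive multipliers and linearly independent gradients, since otherwise conic
Carathéodory would express `-c₀` through fewer than `n` active indices. -/
theorem IsKKT.pos_and_linearIndependent {a : C(T, EuclideanSpace ℝ (Fin n))} {b₀ : C(T, ℝ)}
    {c₀ x₀ : EuclideanSpace ℝ (Fin n)} {t : Fin n → T} {l : Fin n → ℝ}
    (henc : ¬ ∃ D : Finset T, (∀ t ∈ D, ⟪a t, x₀⟫ = b₀ t) ∧ D.card < n ∧
      ∃ γ : T → ℝ, (∀ t, 0 ≤ γ t) ∧ -c₀ = ∑ t ∈ D, γ t • a t)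
    (h : IsKKT a c₀ b₀ x₀ t l) :
    (∀ i, 0 < l i) ∧ LinearIndependent ℝ (fun i => a (t i)) := by
  classical
  obtain ⟨hl, hcomp, hsum⟩ := h
  have hI : ∑ i ∈ Finset.univ.filter (fun i => l i ≠ 0), l i • a (t i) = -c₀ := by
    rw [hsum]
    exact Finset.sum_subset (Finset.subset_univ _) fun i _ hi => by
      have : l i = 0 := by simpa using hi
      simp [this]
  obtain ⟨J, hJ, μ, hμ, hμs, hli⟩ := conic_caratheodory (fun i => a (t i))
    (Finset.univ.filter fun i => l i ≠ 0) l fun i _ => hl i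
  have hn : n ≤ J.card := by
    by_contra hlt
    refine henc ⟨J.image t, ?_, Finset.card_image_le.trans_lt (not_le.1 hlt),
      fun s => ∑ i ∈ J with t i = s, μ i, ?_, ?_⟩
    · intro s hs
      obtain ⟨i, hi, rfl⟩ := Finset.mem_image.1 hs
      exact sub_eq_zero.1 ((mul_eq_zero.1 (hcomp i)).resolve_left (Finset.mem_filter.1 (hJ hi)).2)
    · exact fun s => Finset.sum_nonneg fun i hi => hμ i (Finset.mem_filter.1 hi).1
    · rw [← hI, ← hμs, ← Finset.sum_fiberwise_of_maps_to (g := t)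
        fun i hi => Finset.mem_image_of_mem t hi]
      refine Finset.sum_congr rfl fun s _ => ?_
      rw [Finset.sum_smul]
      exact Finset.sum_congr rfl fun i hi => by rw [(Finset.mem_filter.1 hi).2]
  have hJu : J = Finset.univ := Finset.eq_univ_of_card J
    (le_antisymm (by simpa using Finset.card_le_univ J) (by simpa using hn))
  subst hJu
  refine ⟨fun i => lt_of_le_of_ne (hl i)
    (Finset.mem_filter.1 (hJ (Finset.mem_univ i))).2.symm, ?_⟩
  simpa [linearIndepOn_univ_iff] using hli

/-- Under the Extended Nürnberger Condition, every solution of `P(c, b)` close to `x₀` with `(c, b)`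
close to `(c₀, b₀)` also solves `P(c₀, b)`. -/
theorem eventually_sol_subset [CompactSpace T] [T2Space T] [Nonempty T]
    (a : C(T, EuclideanSpace ℝ (Fin n))) (b₀ : C(T, ℝ)) (c₀ x₀ : EuclideanSpace ℝ (Fin n))
    (hslater : ∃ xSlater, ∀ t : T, ⟪a t, xSlater⟫ < b₀ t)
    (henc : ¬ ∃ D : Finset T, (∀ t ∈ D, ⟪a t, x₀⟫ = b₀ t) ∧ D.card < n ∧
      ∃ γ : T → ℝ, (∀ t, 0 ≤ γ t) ∧ -c₀ = ∑ t ∈ D, γ t • a t) :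
    ∀ᶠ z : (EuclideanSpace ℝ (Fin n) × C(T, ℝ)) × EuclideanSpace ℝ (Fin n) in
      𝓝 ((c₀, b₀), x₀), z.2 ∈ sol a z.1 → z.2 ∈ sol a (c₀, z.1.2) := by
  obtain ⟨xs, hxs⟩ := hslater
  obtain ⟨ρ, hρ, hρxs⟩ : ∃ ρ > 0, ∀ t, ρ ≤ b₀ t - ⟪a t, xs⟫ := by
    have hc : Continuous fun t => b₀ t - ⟪a t, xs⟫ := by fun_prop
    obtain ⟨t₀, -, ht₀⟩ := isCompact_univ.exists_isMinOn Set.univ_nonempty hc.continuousOn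
    exact ⟨_, sub_pos.2 (hxs t₀), fun t => ht₀ (Set.mem_univ t)⟩
  set M : ℝ := (⟪c₀, xs - x₀⟫ + 1) / (ρ / 2) with hM
  have hK : IsCompact ((Set.univ : Set (Fin n → T)) ×ˢ
      (Set.univ.pi fun _ : Fin n => Set.Icc (0 : ℝ) M)) :=
    isCompact_univ.prod (isCompact_univ_pi fun _ => isCompact_Icc)
  have tube := hK.eventually_forall_of_forall_eventually (x₀ := ((c₀, b₀), x₀))
    (P := fun z p => IsKKT a z.1.1 z.1.2 z.2 p.1 p.2 → z.2 ∈ feas a z.1.2 →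
      z.2 ∈ sol a (c₀, z.1.2)) ?_
  · have hb : ∀ᶠ z : (EuclideanSpace ℝ (Fin n) × C(T, ℝ)) × EuclideanSpace ℝ (Fin n) in
        𝓝 ((c₀, b₀), x₀), ‖z.1.2 - b₀‖ < ρ / 2 := by
      have hc : Continuous fun z : (EuclideanSpace ℝ (Fin n) × C(T, ℝ)) ×
        EuclideanSpace ℝ (Fin n) => ‖z.1.2 - b₀‖ := by fun_prop
      exact hc.continuousAt.eventually_lt_const (by simpa using hρ)
    have hB : ∀ᶠ z : (EuclideanSpace ℝ (Fin n) × C(T, ℝ)) × EuclideanSpace ℝ (Fin n) in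
        𝓝 ((c₀, b₀), x₀), ⟪z.1.1, xs - z.2⟫ < ⟪c₀, xs - x₀⟫ + 1 := by
      have hc : Continuous fun z : (EuclideanSpace ℝ (Fin n) × C(T, ℝ)) ×
        EuclideanSpace ℝ (Fin n) => ⟪z.1.1, xs - z.2⟫ := by fun_prop
      exact hc.continuousAt.eventually_lt_const (by simp)
    filter_upwards [tube, hb, hB] with z hz hzb hzB hzs
    have hsl : ∀ t, ρ / 2 ≤ z.1.2 t - ⟪a t, xs⟫ := by
      intro t
      have h1 := (z.1.2 - b₀).norm_coe_le_norm t
      have h2 := (abs_le.1 (h1.trans hzb.le)).1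
      simp only [ContinuousMap.sub_apply] at h2
      linarith [hρxs t]
    obtain ⟨t, l, h⟩ := exists_isKKT a z.1.1 z.1.2 z.2 xs hzs fun t => by linarith [hsl t]
    refine hz (t, l) ⟨trivial, fun i _ => ⟨h.1 i, ?_⟩⟩ h hzs.1
    -- pairing `-c = ∑ l i • a (t i)` with `xs - x` bounds the multipliers
    have h1 : ∑ i, l i * (ρ / 2) ≤ ⟪z.1.1, xs - z.2⟫ := by
      have h2 : ⟪z.1.1, xs - z.2⟫ = ∑ i, l i * (z.1.2 (t i) - ⟪a (t i), xs⟫) := by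
        have h3 := congrArg (fun y => -⟪y, xs - z.2⟫) h.2.2
        simp only [inner_neg_left, neg_neg, sum_inner, inner_smul_left] at h3
        rw [h3, ← Finset.sum_neg_distrib]
        refine Finset.sum_congr rfl fun i _ => ?_
        have h4 := h.2.1 i
        simp only [inner_sub_right, conj_trivial]
        linarith
      rw [h2]
      exact Finset.sum_le_sum fun i _ => mul_le_mul_of_nonneg_left (hsl (t i)) (h.1 i)
    have h2 : l i * (ρ / 2) ≤ ∑ i, l i * (ρ / 2) :=
      Finset.single_le_sum (f := fun i => l i * (ρ / 2))
        (fun j _ => mul_nonneg (h.1 j) (by positivity)) (Finset.mem_univ i)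
    rw [hM, le_div_iff₀ (by positivity)]
    linarith
  rintro ⟨t, l⟩ ⟨-, hl⟩
  by_cases hkkt : IsKKT a c₀ b₀ x₀ t l
  · obtain ⟨hpos, hli⟩ := hkkt.pos_and_linearIndependent henc
    have h1 := eventually_mem_cone _ hli l hpos (-c₀) hkkt.2.2
    have hc : Continuous fun p : ((EuclideanSpace ℝ (Fin n) × C(T, ℝ)) ×
        EuclideanSpace ℝ (Fin n)) × ((Fin n → T) × (Fin n → ℝ)) => fun i => a (p.2.1 i) := by
      fun_prop
    have h2 := hc.continuousAt (x := (((c₀, b₀), x₀), (t, l))) |>.eventually h1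
    have h3 : ∀ᶠ p : ((EuclideanSpace ℝ (Fin n) × C(T, ℝ)) ×
        EuclideanSpace ℝ (Fin n)) × ((Fin n → T) × (Fin n → ℝ)) in 𝓝 (((c₀, b₀), x₀), (t, l)),
        ∀ i, 0 < p.2.2 i := by
      refine eventually_all.2 fun i => ?_
      have hc : Continuous fun p : ((EuclideanSpace ℝ (Fin n) × C(T, ℝ)) ×
        EuclideanSpace ℝ (Fin n)) × ((Fin n → T) × (Fin n → ℝ)) => p.2.2 i := by fun_prop
      exact hc.continuousAt.eventually_const_lt (hpos i)
    filter_upwards [h2, h3] with p ⟨μ, hμ, hμc⟩ hp hpk hpf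
    refine ⟨hpf, fun u hu => ?_⟩
    have hact : ∀ i, ⟪a (p.2.1 i), p.1.2⟫ = p.1.1.2 (p.2.1 i) := fun i =>
      sub_eq_zero.1 ((mul_eq_zero.1 (hpk.2.1 i)).resolve_left (hp i).ne')
    have h4 : ⟪-c₀, u⟫ ≤ ⟪-c₀, p.1.2⟫ := by
      rw [hμc]
      simp only [sum_inner, inner_smul_left, conj_trivial]
      refine Finset.sum_le_sum fun i _ => mul_le_mul_of_nonneg_left ?_ (hμ i)
      rw [hact i]
      exact hu _
    simpa using h4
  · -- the certificate relation is closed, so its failure persists nearby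
    have hclosed : IsClosed {p : ((EuclideanSpace ℝ (Fin n) × C(T, ℝ)) ×
        EuclideanSpace ℝ (Fin n)) × ((Fin n → T) × (Fin n → ℝ)) |
        IsKKT a p.1.1.1 p.1.1.2 p.1.2 p.2.1 p.2.2} := by
      simp only [IsKKT, Set.ofPred_and, Set.ofPred_forall]
      refine (isClosed_iInter fun i => isClosed_le (by fun_prop) (by fun_prop)).inter
        ((isClosed_iInter fun i => isClosed_eq (by fun_prop) (by fun_prop)).inter
        (isClosed_eq (by fun_prop) (by fun_prop)))
    filter_upwards [hclosed.isOpen_compl.mem_nhds (x := (((c₀, b₀), x₀), (t, l))) hkkt]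
      with p hp hpk
    exact absurd hpk hp

end Aux

/-- under the Extended Nürnberger Condition at `((c₀, b₀), x₀)`,
`clm_q S((c₀, b₀), x₀) = clm_q S_c₀(b₀, x₀)`. -/
theorem stmt19 {n : ℕ} {T : Type*} [TopologicalSpace T] [CompactSpace T] [T2Space T]
    [Nonempty T] (q : ℝ) (hq : 0 < q)
    (a : C(T, EuclideanSpace ℝ (Fin n))) (b₀ : C(T, ℝ))
    (c₀ x₀ : EuclideanSpace ℝ (Fin n))
    (hsol : x₀ ∈ sol a (c₀, b₀))
    (hslater : ∃ xSlater, ∀ t : T, ⟪a t, xSlater⟫ < b₀ t)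
    (henc : ¬ ∃ D : Finset T, (∀ t ∈ D, ⟪a t, x₀⟫ = b₀ t) ∧ D.card < n ∧
      ∃ γ : T → ℝ, (∀ t, 0 ≤ γ t) ∧ -c₀ = ∑ t ∈ D, γ t • a t) :
    clmMod q (sol a) (c₀, b₀) x₀ = clmMod q (fun b => sol a (c₀, b)) b₀ x₀ := by
  have hnorm : ∀ (c : EuclideanSpace ℝ (Fin n)) (b : C(T, ℝ)),
      ‖b - b₀‖ ≤ ‖((c, b) : EuclideanSpace ℝ (Fin n) × C(T, ℝ)) - (c₀, b₀)‖ := fun c b =>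
    le_max_right _ _
  have hiff : ∀ τ : ℝ, CalmWith q τ (sol a) (c₀, b₀) x₀ ↔
      CalmWith q τ (fun b => sol a (c₀, b)) b₀ x₀ := by
    intro τ
    constructor
    · rintro ⟨U, hU, V, hV, h⟩
      have hc : Continuous fun b : C(T, ℝ) => (c₀, b) := by fun_prop
      refine ⟨U, hU, _, hc.continuousAt.preimage_mem_nhds hV, fun b hb x hx hxU => ?_⟩
      simpa [Prod.norm_def] using h (c₀, b) hb x hx hxU
    · rintro ⟨U, hU, V, hV, h⟩
      have hev := eventually_sol_subset a b₀ c₀ x₀ hslater henc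
      rw [nhds_prod_eq, eventually_prod_iff] at hev
      obtain ⟨pa, hpa, pb, hpb, hab⟩ := hev
      refine ⟨U ∩ {x | pb x}, inter_mem hU hpb, Prod.snd ⁻¹' V ∩ {z | pa z},
        inter_mem (continuous_snd.continuousAt.preimage_mem_nhds hV) hpa, ?_⟩
      rintro ⟨c, b⟩ ⟨hbV, hz⟩ x hx ⟨hxU, hxb⟩
      exact (h b hbV x (hab hz hxb hx) hxU).trans (hnorm c b)
  simp only [clmMod, hiff]

end
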